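/- Let V be a uniformly bounded irreducible weight W_n ⊗ B-module with support contained in α + ℤ^n and all weight spaces of dimension at most N. For 0 ≠ r ∈ ℤ^n let I_{(1,r)} = { b ∈ B : (D(e_1,r) ⊗ b)·V_α = 0 }. Then each I_{(1,r)} is an ideal of B with dim(B/I_{(1,r)}) ≤ N², and I_{(1,e_1)} I_{(1,e_2)}^j ⊆ I_{(1, e_1 + j e_2)} for all j ≥ 1; moreover I_{(1,e_1)} I_{(1,e_2)}^{N²} ⊆ I_{(1, e_1 + j e_2)} for all j ≥ 1. -/

import Mathlib

open scoped TensorProduct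

noncomputable section

namespace LoopWitt

/-- The standard pairing `(u | m)` between `ℂⁿ` and `ℤⁿ`. -/
def pairC {n : ℕ} (u : Fin n → ℂ) (m : Fin n → ℤ) : ℂ := ∑ i, u i * (m i : ℂ)

/-- The standard pairing on `ℂⁿ`. -/
def pairCC {n : ℕ} (u lam : Fin n → ℂ) : ℂ := ∑ i, u i * lam i

/-- `ℤⁿ = K ⊕ ℤβ`. -/
def IsDirectSumDecomp {n : ℕ} (K : AddSubgroup (Fin n → ℤ)) (β : Fin n → ℤ) : Prop :=
  (∀ m : Fin n → ℤ, ∃ a ∈ K, ∃ d : ℤ, m = a + d • β) ∧ ∀ d : ℤ, d • β ∈ K → d = 0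

/-- `r` lies in the positive part `K + ℕ₊ β` of `ℤⁿ`. -/
def posDeg {n : ℕ} (K : AddSubgroup (Fin n → ℤ)) (β : Fin n → ℤ) (r : Fin n → ℤ) : Prop :=
  ∃ a ∈ K, ∃ d : ℤ, 1 ≤ d ∧ r = a + d • β

/-- A representation of the loop Witt algebra `Wₙ ⊗ B`, given by operators
`D u r b` (for `D(u,r) ⊗ b`, where `D(u,r) = Σ uᵢ tʳ dᵢ`), bilinear in `u` and `b`,
subject to the Witt bracket relations. -/
structure WittRep (n : ℕ) (B : Type*) [CommRing B] [Algebra ℂ B]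
    (V : Type*) [AddCommGroup V] [Module ℂ V] where
  D : (Fin n → ℂ) → (Fin n → ℤ) → B → Module.End ℂ V
  D_add_u : ∀ u u' r b, D (u + u') r b = D u r b + D u' r b
  D_smul_u : ∀ (c : ℂ) u r b, D (c • u) r b = c • D u r b
  D_add_b : ∀ u r b b', D u r (b + b') = D u r b + D u r b'
  D_smul_b : ∀ (c : ℂ) u r b, D u r (c • b) = c • D u r b
  comm_DD : ∀ u r b v s b',
    ⁅D u r b, D v s b'⁆ = D (pairC u s • v - pairC v r • u) (r + s) (b * b')

namespace WittRep

variable {n : ℕ} {B : Type*} [CommRing B] [Algebra ℂ B]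
  {V : Type*} [AddCommGroup V] [Module ℂ V]

/-- The weight space of weight `lam` with respect to the Cartan subalgebra `H = ⊕ ℂ dᵢ`. -/
def weightSpace (ρ : WittRep n B V) (lam : Fin n → ℂ) : Submodule ℂ V where
  carrier := {x | ∀ u, ρ.D u 0 1 x = pairCC u lam • x}
  add_mem' := by
    intro a b ha hb u
    rw [map_add, ha u, hb u, smul_add]
  zero_mem' := by intro u; simp
  smul_mem' := by
    intro c a ha u
    rw [map_smul, ha u, smul_comm]

/-- A weight module: the sum of the weight spaces is everything. -/
def IsWeightModule (ρ : WittRep n B V) : Prop :=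
  (⨆ lam : Fin n → ℂ, ρ.weightSpace lam) = ⊤

/-- Uniformly bounded weight spaces. -/
def UniformlyBounded (ρ : WittRep n B V) : Prop :=
  ∃ N : ℕ, ∀ lam, Module.rank ℂ ↥(ρ.weightSpace lam) ≤ (N : Cardinal)

/-- A Harish-Chandra module: a weight module with finite dimensional weight spaces. -/
def HarishChandra (ρ : WittRep n B V) : Prop :=
  ρ.IsWeightModule ∧ ∀ lam, FiniteDimensional ℂ ↥(ρ.weightSpace lam)

/-- A submodule invariant under all the operators. -/
def Invariant (ρ : WittRep n B V) (U : Submodule ℂ V) : Prop :=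
  ∀ u r b, ∀ x ∈ U, ρ.D u r b x ∈ U

/-- Irreducibility. -/
def IsIrreducible (ρ : WittRep n B V) : Prop :=
  (∃ x : V, x ≠ 0) ∧ ∀ U : Submodule ℂ V, ρ.Invariant U → U = ⊥ ∨ U = ⊤

/-- A single point evaluation module. -/
def IsSinglePointEval (ρ : WittRep n B V) : Prop :=
  ∃ η : B →ₐ[ℂ] ℂ, ∀ u r b, ρ.D u r b = η b • ρ.D u r 1

/-- Nontriviality of the action. -/
def IsNontrivial (ρ : WittRep n B V) : Prop := ∃ u r b x, ρ.D u r b x ≠ 0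

/-- `z` is a highest weight vector generating the module, with respect to the
triangular decomposition determined by `ℤⁿ = K ⊕ ℤβ`. -/
def IsHWVector (ρ : WittRep n B V) (K : AddSubgroup (Fin n → ℤ)) (β : Fin n → ℤ)
    (z : V) : Prop :=
  z ≠ 0 ∧ (∃ lam, z ∈ ρ.weightSpace lam) ∧
  (∀ u r b, posDeg K β r → ρ.D u r b z = 0) ∧
  ∀ U : Submodule ℂ V, ρ.Invariant U → z ∈ U → U = ⊤

/-- A highest weight module. -/
def IsHighestWeight (ρ : WittRep n B V) : Prop :=
  ∃ (K : AddSubgroup (Fin n → ℤ)) (β : Fin n → ℤ),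
    IsDirectSumDecomp K β ∧ ∃ z, ρ.IsHWVector K β z

end WittRep

/-- A representation of the loop extended Witt algebra `𝔏_{S,n}(B) = (Wₙ ⋉ (S ⊗ Aₙ)) ⊗ B`,
given by operators `D u r b` (for `D(u,r) ⊗ b`) and `E s m b` (for `s ⊗ tᵐ ⊗ b`),
suitably multilinear, subject to the bracket relations of `𝔏_{S,n}(B)`. -/
structure ExtWittRep (n : ℕ) (S : Type*) [AddCommGroup S] [Module ℂ S]
    (B : Type*) [CommRing B] [Algebra ℂ B]
    (V : Type*) [AddCommGroup V] [Module ℂ V] where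
  D : (Fin n → ℂ) → (Fin n → ℤ) → B → Module.End ℂ V
  E : S → (Fin n → ℤ) → B → Module.End ℂ V
  D_add_u : ∀ u u' r b, D (u + u') r b = D u r b + D u' r b
  D_smul_u : ∀ (c : ℂ) u r b, D (c • u) r b = c • D u r b
  D_add_b : ∀ u r b b', D u r (b + b') = D u r b + D u r b'
  D_smul_b : ∀ (c : ℂ) u r b, D u r (c • b) = c • D u r b
  E_add_s : ∀ s s' m b, E (s + s') m b = E s m b + E s' m b
  E_smul_s : ∀ (c : ℂ) s m b, E (c • s) m b = c • E s m b
  E_add_b : ∀ s m b b', E s m (b + b') = E s m b + E s m b'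
  E_smul_b : ∀ (c : ℂ) s m b, E s m (c • b) = c • E s m b
  comm_DD : ∀ u r b v s b',
    ⁅D u r b, D v s b'⁆ = D (pairC u s • v - pairC v r • u) (r + s) (b * b')
  comm_DE : ∀ u r b s m b', ⁅D u r b, E s m b'⁆ = pairC u m • E s (m + r) (b * b')
  comm_EE : ∀ s m b s' m' b', ⁅E s m b, E s' m' b'⁆ = 0

namespace ExtWittRep

variable {n : ℕ} {S : Type*} [AddCommGroup S] [Module ℂ S]
  {B : Type*} [CommRing B] [Algebra ℂ B]
  {V : Type*} [AddCommGroup V] [Module ℂ V]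

/-- The weight space of the weight given by `lam` on `H` and the linear functional `c`
on `S ≅ S ⊗ t⁰ (⊗ 1)`, with respect to the Cartan subalgebra `H ⊕ (S ⊗ t⁰) (⊗ 1)`. -/
def weightSpace (ρ : ExtWittRep n S B V) (lam : Fin n → ℂ) (c : S →ₗ[ℂ] ℂ) :
    Submodule ℂ V where
  carrier := {x | (∀ u, ρ.D u 0 1 x = pairCC u lam • x) ∧ ∀ s, ρ.E s 0 1 x = c s • x}
  add_mem' := by
    intro a b ha hb
    refine ⟨fun u => ?_, fun s => ?_⟩
    · rw [map_add, ha.1 u, hb.1 u, smul_add]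
    · rw [map_add, ha.2 s, hb.2 s, smul_add]
  zero_mem' := by exact ⟨fun u => by simp, fun s => by simp⟩
  smul_mem' := by
    intro t a ha
    refine ⟨fun u => ?_, fun s => ?_⟩
    · rw [map_smul, ha.1 u, smul_comm]
    · rw [map_smul, ha.2 s, smul_comm]

/-- A weight module: the weight spaces span. -/
def IsWeightModule (ρ : ExtWittRep n S B V) : Prop :=
  (⨆ p : (Fin n → ℂ) × (S →ₗ[ℂ] ℂ), ρ.weightSpace p.1 p.2) = ⊤

/-- Uniformly bounded weight spaces. -/
def UniformlyBounded (ρ : ExtWittRep n S B V) : Prop :=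
  ∃ N : ℕ, ∀ lam c, Module.rank ℂ ↥(ρ.weightSpace lam c) ≤ (N : Cardinal)

/-- Harish-Chandra: a weight module with finite dimensional weight spaces. -/
def HarishChandra (ρ : ExtWittRep n S B V) : Prop :=
  ρ.IsWeightModule ∧ ∀ lam c, FiniteDimensional ℂ ↥(ρ.weightSpace lam c)

/-- Invariant submodule. -/
def Invariant (ρ : ExtWittRep n S B V) (U : Submodule ℂ V) : Prop :=
  (∀ u r b, ∀ x ∈ U, ρ.D u r b x ∈ U) ∧ (∀ s m b, ∀ x ∈ U, ρ.E s m b x ∈ U)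

/-- Irreducibility. -/
def IsIrreducible (ρ : ExtWittRep n S B V) : Prop :=
  (∃ x : V, x ≠ 0) ∧ ∀ U : Submodule ℂ V, ρ.Invariant U → U = ⊥ ∨ U = ⊤

/-- A single point evaluation module. -/
def IsSinglePointEval (ρ : ExtWittRep n S B V) : Prop :=
  ∃ η : B →ₐ[ℂ] ℂ, (∀ u r b, ρ.D u r b = η b • ρ.D u r 1) ∧
    ∀ s m b, ρ.E s m b = η b • ρ.E s m 1

/-- Single point generalised evaluation module: the action factors through
`𝔤 ⊗ B/𝔪ᵏ` for some maximal ideal `𝔪` and some `k`. -/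
def IsGenEval (ρ : ExtWittRep n S B V) : Prop :=
  ∃ 𝔪 : Ideal B, 𝔪.IsMaximal ∧ ∃ k : ℕ, ∀ b ∈ 𝔪 ^ k,
    (∀ u r, ρ.D u r b = 0) ∧ ∀ s m, ρ.E s m b = 0

/-- Nontriviality of the action. -/
def IsNontrivial (ρ : ExtWittRep n S B V) : Prop :=
  (∃ u r b x, ρ.D u r b x ≠ 0) ∨ ∃ s m b x, ρ.E s m b x ≠ 0

/-- The submodule of vectors on which the whole Lie algebra acts trivially. -/
def trivVectors (ρ : ExtWittRep n S B V) : Submodule ℂ V where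
  carrier := {x | (∀ u r b, ρ.D u r b x = 0) ∧ ∀ s m b, ρ.E s m b x = 0}
  add_mem' := by
    intro a b ha hb
    exact ⟨fun u r c => by rw [map_add, ha.1 u r c, hb.1 u r c, add_zero],
      fun s m c => by rw [map_add, ha.2 s m c, hb.2 s m c, add_zero]⟩
  zero_mem' := ⟨fun u r c => by simp, fun s m c => by simp⟩
  smul_mem' := by
    intro t a ha
    exact ⟨fun u r c => by rw [map_smul, ha.1 u r c, smul_zero],
      fun s m c => by rw [map_smul, ha.2 s m c, smul_zero]⟩

/-- Highest weight vector for the triangular decomposition determined by `ℤⁿ = K ⊕ ℤβ`,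
generating the whole module. -/
def IsHWVector (ρ : ExtWittRep n S B V) (K : AddSubgroup (Fin n → ℤ)) (β : Fin n → ℤ)
    (z : V) : Prop :=
  z ≠ 0 ∧ (∃ lam c, z ∈ ρ.weightSpace lam c) ∧
  (∀ u r b, posDeg K β r → ρ.D u r b z = 0) ∧
  (∀ s m b, posDeg K β m → ρ.E s m b z = 0) ∧
  ∀ U : Submodule ℂ V, ρ.Invariant U → z ∈ U → U = ⊤

/-- Highest weight module. -/
def IsHighestWeight (ρ : ExtWittRep n S B V) : Prop :=
  ∃ (K : AddSubgroup (Fin n → ℤ)) (β : Fin n → ℤ),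
    IsDirectSumDecomp K β ∧ ∃ z, ρ.IsHWVector K β z

/-- Invariance under the degree-`K` part `(𝔏_{S,n}(B))_K`. -/
def InvariantK (ρ : ExtWittRep n S B V) (K : AddSubgroup (Fin n → ℤ))
    (U : Submodule ℂ V) : Prop :=
  (∀ u, ∀ r ∈ K, ∀ b, ∀ x ∈ U, ρ.D u r b x ∈ U) ∧
    ∀ s, ∀ m ∈ K, ∀ b, ∀ x ∈ U, ρ.E s m b x ∈ U

/-- The highest weight space: the `(𝔏_{S,n}(B))_K`-submodule generated by `z`. -/
def hwSpace (ρ : ExtWittRep n S B V) (K : AddSubgroup (Fin n → ℤ)) (z : V) :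
    Submodule ℂ V :=
  sInf {U : Submodule ℂ V | z ∈ U ∧ ρ.InvariantK K U}

end ExtWittRep

end LoopWitt

namespace LoopWitt

/-- In an algebra of dimension at most `d`, the powers of an ideal are stationary from
exponent `d` on. -/
theorem ideal_pow_le_pow_add_of_finrank_le {Q : Type*} [CommRing Q] [Algebra ℂ Q]
    [FiniteDimensional ℂ Q] (K : Ideal Q) {d : ℕ} (hd : Module.finrank ℂ Q ≤ d) (m : ℕ) :
    K ^ d ≤ K ^ (d + m) := by
  have stationary_or_small : ∀ k : ℕ, K ^ k = K ^ (k + 1) ∨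
      Module.finrank ℂ ((K ^ k).restrictScalars ℂ) + k ≤ d := by
    intro k
    induction k with
    | zero => exact Or.inr ((Submodule.finrank_le _).trans hd)
    | succ k ih =>
      by_cases h : K ^ k = K ^ (k + 1)
      · left
        rw [pow_succ K k, pow_succ K (k + 1), ← h]
      · right
        have hlt : (K ^ (k + 1)).restrictScalars ℂ < (K ^ k).restrictScalars ℂ :=
          lt_of_le_of_ne (Ideal.pow_le_pow_right k.le_succ)
            fun he => h (Submodule.restrictScalars_injective ℂ Q Q he).symm
        have := Submodule.finrank_lt_finrank_of_lt hlt
        have := ih.resolve_left h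
        omega
  have stationary : K ^ d = K ^ (d + 1) := by
    rcases stationary_or_small d with h | h
    · exact h
    · have hbot : (K ^ d).restrictScalars ℂ = ⊥ := Submodule.finrank_eq_zero.mp (by omega)
      have hbot' : K ^ d = ⊥ := by simpa using hbot
      rw [pow_succ, hbot', Ideal.bot_mul]
  induction m with
  | zero => exact le_rfl
  | succ m ih => exact ih.trans_eq (by rw [pow_add, stationary, ← pow_add]; congr 1; omega)

/-- If `J` has codimension at most `d`, then `K ^ d ≤ K ^ j ⊔ J` for every `j`. -/
theorem ideal_pow_le_pow_sup_of_rank_quotient_le {B : Type*} [CommRing B] [Algebra ℂ B]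
    (K J : Ideal B) {d : ℕ} (hJ : Module.rank ℂ (B ⧸ J) ≤ (d : Cardinal)) (j : ℕ) :
    K ^ d ≤ K ^ j ⊔ J := by
  have : FiniteDimensional ℂ (B ⧸ J) :=
    Module.rank_lt_aleph0_iff.mp (hJ.trans_lt Cardinal.natCast_lt_aleph0)
  have hfin : Module.finrank ℂ (B ⧸ J) ≤ d := Module.finrank_le_of_rank_le hJ
  have h := (ideal_pow_le_pow_add_of_finrank_le (K.map (Ideal.Quotient.mk J)) hfin j).trans
    (Ideal.pow_le_pow_right (Nat.le_add_left j d))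
  rw [← Ideal.map_pow, ← Ideal.map_pow, Ideal.map_le_iff_le_comap,
    Ideal.comap_map_of_surjective _ Ideal.Quotient.mk_surjective] at h
  rwa [← RingHom.ker_eq_comap_bot, Ideal.mk_ker] at h

theorem pairCC_add_intCast {n : ℕ} (u lam : Fin n → ℂ) (r : Fin n → ℤ) :
    pairCC u (fun i => lam i + (r i : ℂ)) = pairCC u lam + pairC u r := by
  simp [pairCC, pairC, mul_add, Finset.sum_add_distrib]

theorem pairC_single {n : ℕ} (i : Fin n) (c : ℂ) (m : Fin n → ℤ) :
    pairC (Pi.single i c) m = c * (m i : ℂ) := by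
  simp [pairC, Pi.single_apply]

theorem pairC_add_nsmul {n : ℕ} {v : Fin n → ℂ} {r s : Fin n → ℤ} (hvs : pairC v s = 0) (j : ℕ) :
    pairC v (r + j • s) = pairC v r := by
  have hsum : pairC v (r + j • s) = pairC v r + j * pairC v s := by
    simp only [pairC, Finset.mul_sum, ← Finset.sum_add_distrib]
    refine Finset.sum_congr rfl fun i _ => ?_
    simp
    ring
  rw [hsum, hvs, mul_zero, add_zero]

namespace WittRep

variable {n : ℕ} {B : Type*} [CommRing B] [Algebra ℂ B]
  {V : Type*} [AddCommGroup V] [Module ℂ V] (ρ : WittRep n B V)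

theorem D_comm_apply (u r b v s b') (x : V) :
    ρ.D u r b (ρ.D v s b' x) - ρ.D v s b' (ρ.D u r b x) =
      ρ.D (pairC u s • v - pairC v r • u) (r + s) (b * b') x := by
  rw [← ρ.comm_DD, Ring.lie_def]
  rfl

theorem D_zero_comm_apply (u b v s b') (x : V) :
    ρ.D u 0 b (ρ.D v s b' x) - ρ.D v s b' (ρ.D u 0 b x) =
      pairC u s • ρ.D v s (b * b') x := by
  rw [D_comm_apply, show pairC v 0 = 0 by simp [pairC], zero_smul, sub_zero, zero_add,
    ρ.D_smul_u, LinearMap.smul_apply]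

/-- `D(v,r) ⊗ b` shifts weights by `r`. -/
theorem D_mem_weightSpace (v r b) {lam : Fin n → ℂ} {x : V} (hx : x ∈ ρ.weightSpace lam) :
    ρ.D v r b x ∈ ρ.weightSpace (fun i => lam i + (r i : ℂ)) := by
  intro u
  have h := ρ.D_zero_comm_apply u 1 v r b x
  rw [hx u, map_smul, one_mul, sub_eq_iff_eq_add] at h
  rw [h, pairCC_add_intCast, add_smul, add_comm]

/-- The largest ideal of `B` contained in `{ b : (D(v,r) ⊗ b)·V_lam = 0 }`. -/
def annIdeal (v : Fin n → ℂ) (lam : Fin n → ℂ) (r : Fin n → ℤ) : Ideal B where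
  carrier := {b | ∀ c, ∀ x ∈ ρ.weightSpace lam, ρ.D v r (c * b) x = 0}
  add_mem' := by
    intro a b ha hb c x hx
    rw [mul_add, ρ.D_add_b, LinearMap.add_apply, ha c x hx, hb c x hx, add_zero]
  zero_mem' := by
    intro c x _
    rw [mul_zero, ← zero_smul ℂ (0 : B), ρ.D_smul_b, zero_smul, LinearMap.zero_apply]
  smul_mem' := by
    intro a b hb c x hx
    rw [smul_eq_mul, ← mul_assoc]
    exact hb (c * a) x hx

theorem mem_annIdeal_iff {v lam : Fin n → ℂ} {r : Fin n → ℤ} (hr : r ≠ 0) {b : B} :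
    b ∈ ρ.annIdeal v lam r ↔ ∀ x ∈ ρ.weightSpace lam, ρ.D v r b x = 0 := by
  refine ⟨fun h x hx => by simpa using h 1 x hx, fun h c x hx => ?_⟩
  obtain ⟨i, hi⟩ := Function.ne_iff.mp hr
  have hcx : ρ.D (Pi.single i 1) 0 c x ∈ ρ.weightSpace lam := by
    simpa using ρ.D_mem_weightSpace (Pi.single i 1) 0 c hx
  have hcomm := ρ.D_zero_comm_apply (Pi.single i 1) c v r b x
  rw [h x hx, h _ hcx, map_zero, sub_zero, pairC_single, one_mul] at hcomm
  exact (smul_eq_zero.mp hcomm.symm).resolve_left (Int.cast_ne_zero.mpr hi)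

/-- The linear map sending `b` to `D(v,r) ⊗ b`, seen as a map between weight spaces. -/
def actionMap (v lam : Fin n → ℂ) (r : Fin n → ℤ) :
    B →ₗ[ℂ] ρ.weightSpace lam →ₗ[ℂ] ρ.weightSpace (fun i => lam i + (r i : ℂ)) where
  toFun b := (ρ.D v r b).restrict fun _ hx => ρ.D_mem_weightSpace v r b hx
  map_add' b b' := by ext x; simp [ρ.D_add_b]
  map_smul' c b := by ext x; simp [ρ.D_smul_b]

theorem ker_actionMap {v lam : Fin n → ℂ} {r : Fin n → ℤ} (hr : r ≠ 0) :
    LinearMap.ker (ρ.actionMap v lam r) = (ρ.annIdeal v lam r).restrictScalars ℂ := by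
  ext b
  rw [Submodule.restrictScalars_mem, ρ.mem_annIdeal_iff hr, LinearMap.mem_ker, LinearMap.ext_iff]
  simp [actionMap, Subtype.ext_iff]

theorem rank_quotient_annIdeal_le {v lam : Fin n → ℂ} {r : Fin n → ℤ} (hr : r ≠ 0) {N : ℕ}
    (hbd : ∀ mu, Module.rank ℂ (ρ.weightSpace mu) ≤ (N : Cardinal)) :
    Module.rank ℂ (B ⧸ ρ.annIdeal v lam r) ≤ ((N ^ 2 : ℕ) : Cardinal) := by
  have hfd (mu) : FiniteDimensional ℂ (ρ.weightSpace mu) :=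
    Module.rank_lt_aleph0_iff.mp ((hbd mu).trans_lt Cardinal.natCast_lt_aleph0)
  have hle (mu) : Module.finrank ℂ (ρ.weightSpace mu) ≤ N := Module.finrank_le_of_rank_le (hbd mu)
  let e : (B ⧸ ρ.annIdeal v lam r) ≃ₗ[ℂ] LinearMap.range (ρ.actionMap v lam r) :=
    (Submodule.Quotient.restrictScalarsEquiv ℂ (ρ.annIdeal v lam r)).symm ≪≫ₗ
      Submodule.quotEquivOfEq _ _ (ρ.ker_actionMap hr).symm ≪≫ₗ
      (ρ.actionMap v lam r).quotKerEquivRange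
  have : FiniteDimensional ℂ (B ⧸ ρ.annIdeal v lam r) := Module.Finite.equiv e.symm
  rw [← Module.finrank_eq_rank, Nat.cast_le, e.finrank_eq, sq]
  refine (Submodule.finrank_le _).trans ?_
  rw [Module.finrank_linearMap]
  exact Nat.mul_le_mul (hle _) (hle _)

/-- If `(v|s) = 0` and `(v|r) ≠ 0`, then bracketing `D(v,s)` with `D(v,r)` gives a nonzero
multiple of `D(v,r+s)`, so the annihilating ideals multiply. -/
theorem annIdeal_mul_le {v lam : Fin n → ℂ} {r s : Fin n → ℤ} (hs : s ≠ 0)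
    (hvs : pairC v s = 0) (hvr : pairC v r ≠ 0) :
    ρ.annIdeal v lam r * ρ.annIdeal v lam s ≤ ρ.annIdeal v lam (r + s) := by
  have hr : r ≠ 0 := by
    rintro rfl
    exact hvr (by simp [pairC])
  have hrs : r + s ≠ 0 := by
    intro h
    rw [eq_neg_of_add_eq_zero_left h] at hvr
    exact hvr (by simpa [pairC] using hvs)
  rw [Ideal.mul_le]
  intro a ha b hb
  rw [ρ.mem_annIdeal_iff hrs]
  intro x hx
  have hcomm := ρ.D_comm_apply v s b v r a x
  rw [(ρ.mem_annIdeal_iff hr).mp ha x hx, (ρ.mem_annIdeal_iff hs).mp hb x hx, map_zero, map_zero,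
    sub_zero, hvs, zero_smul, sub_zero, ρ.D_smul_u, LinearMap.smul_apply, add_comm s,
    mul_comm b] at hcomm
  exact (smul_eq_zero.mp hcomm.symm).resolve_left hvr

theorem annIdeal_mul_pow_le {v lam : Fin n → ℂ} {r s : Fin n → ℤ} (hs : s ≠ 0)
    (hvs : pairC v s = 0) (hvr : pairC v r ≠ 0) (j : ℕ) :
    ρ.annIdeal v lam r * ρ.annIdeal v lam s ^ j ≤ ρ.annIdeal v lam (r + j • s) := by
  induction j with
  | zero => simp
  | succ j ih =>
    rw [pow_succ, ← mul_assoc, succ_nsmul, ← add_assoc]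
    exact (Ideal.mul_mono_left ih).trans
      (ρ.annIdeal_mul_le hs hvs (by rwa [pairC_add_nsmul hvs]))

end WittRep

end LoopWitt

open LoopWitt

/-- The ideals `I_{(1,r)} = { b ∈ B : (D(e₁,r) ⊗ b)·V_α = 0 }` of a
uniformly bounded irreducible weight `Wₙ ⊗ B`-module: each is an ideal of codimension at
most `N²`, and the product inclusions `I_{(1,e₁)} I_{(1,e₂)}ʲ ⊆ I_{(1,e₁+je₂)}` and
`I_{(1,e₁)} I_{(1,e₂)}^{N²} ⊆ I_{(1,e₁+je₂)}` hold for all `j ≥ 1`. -/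
theorem stmt4 {n : ℕ} (hn : 2 ≤ n) {B V : Type*}
    [CommRing B] [Algebra ℂ B] [Algebra.FiniteType ℂ B]
    [AddCommGroup V] [Module ℂ V]
    (ρ : WittRep n B V)
    (hw : ρ.IsWeightModule) (hirr : ρ.IsIrreducible)
    (α : Fin n → ℂ) (N : ℕ)
    (hsupp : ∀ lam, ρ.weightSpace lam ≠ ⊥ → ∃ m : Fin n → ℤ, lam = fun i => α i + (m i : ℂ))
    (hbd : ∀ lam, Module.rank ℂ ↥(ρ.weightSpace lam) ≤ (N : Cardinal)) :
    ∃ I : (Fin n → ℤ) → Ideal B,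
      -- `I r` has carrier `I_{(1,r)}` (this says in particular that `I_{(1,r)}` is an ideal)
      (∀ r : Fin n → ℤ, r ≠ 0 →
        ∀ b : B, b ∈ I r ↔ ∀ x ∈ ρ.weightSpace α,
          ρ.D (Pi.single (⟨0, by omega⟩ : Fin n) (1 : ℂ)) r b x = 0) ∧
      -- `dim (B / I_{(1,r)}) ≤ N²`
      (∀ r : Fin n → ℤ, r ≠ 0 → Module.rank ℂ (B ⧸ I r) ≤ ((N ^ 2 : ℕ) : Cardinal)) ∧
      -- `I_{(1,e₁)} I_{(1,e₂)}ʲ ⊆ I_{(1, e₁ + j e₂)}` for all `j ≥ 1`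
      (∀ j : ℕ, 1 ≤ j →
        I (Pi.single (⟨0, by omega⟩ : Fin n) (1 : ℤ)) *
            I (Pi.single (⟨1, by omega⟩ : Fin n) (1 : ℤ)) ^ j ≤
          I (Pi.single (⟨0, by omega⟩ : Fin n) (1 : ℤ) +
              j • Pi.single (⟨1, by omega⟩ : Fin n) (1 : ℤ))) ∧
      -- `I_{(1,e₁)} I_{(1,e₂)}^{N²} ⊆ I_{(1, e₁ + j e₂)}` for all `j ≥ 1`
      (∀ j : ℕ, 1 ≤ j →
        I (Pi.single (⟨0, by omega⟩ : Fin n) (1 : ℤ)) *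
            I (Pi.single (⟨1, by omega⟩ : Fin n) (1 : ℤ)) ^ (N ^ 2) ≤
          I (Pi.single (⟨0, by omega⟩ : Fin n) (1 : ℤ) +
              j • Pi.single (⟨1, by omega⟩ : Fin n) (1 : ℤ))) := by
  set v : Fin n → ℂ := Pi.single ⟨0, by omega⟩ 1
  set r : Fin n → ℤ := Pi.single ⟨0, by omega⟩ 1
  set s : Fin n → ℤ := Pi.single ⟨1, by omega⟩ 1
  have hs : s ≠ 0 := by simp [s]
  have hvs : pairC v s = 0 := by simp [v, s, pairC_single]
  have hvr : pairC v r ≠ 0 := by simp [v, r, pairC_single]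
  have hmul := ρ.annIdeal_mul_pow_le (lam := α) hs hvs hvr
  refine ⟨ρ.annIdeal v α, fun q hq b => ρ.mem_annIdeal_iff hq,
    fun q hq => ρ.rank_quotient_annIdeal_le hq hbd, fun j _ => hmul j, fun j _ => ?_⟩
  have hne : r + j • s ≠ 0 := by
    intro h
    rw [← pairC_add_nsmul hvs j, h] at hvr
    exact hvr (by simp [pairC])
  calc _ ≤ ρ.annIdeal v α r * (ρ.annIdeal v α s ^ j ⊔ ρ.annIdeal v α (r + j • s)) :=
        Ideal.mul_mono_right (ideal_pow_le_pow_sup_of_rank_quotient_le _ _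
          (ρ.rank_quotient_annIdeal_le hne hbd) j)
    _ ≤ _ := by
        rw [Ideal.mul_sup]
        exact sup_le (hmul j) Ideal.mul_le_right
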